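/- Let p be a prime number, F a field of characteristic p, and d ≥ 1. Let H ⊆ GL_d(F) be a finite subgroup whose order is a power of p. Then there exists a chain H = H_0 ⊇ H_1 ⊇ ⋯ ⊇ H_{d−1} = {1} of normal subgroups of H such that each successive quotient H_{i−1}/H_i is abelian and every element of H_{i−1}/H_i has order dividing p, for i = 1,…,d−1. (When d = 1 this asserts that H is trivial.) -/

import Mathlib

/-!
Let `I` be the augmentation ideal of the group algebra `F[H]`. The elements `h` of `H` with
`h - 1 ∈ I ^ n` form a normal subgroup `D n`, and the identities
`x * y - y * x = (x - 1) * (y - 1) - (y - 1) * (x - 1)` and `x ^ p - 1 = (x - 1) ^ p` give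
`⁅D m, D n⁆ ≤ D (m + n)` and `x ^ p ∈ D (n * p)` for `x ∈ D n`. Since `H` is a finite `p`-group and
`F` has characteristic `p`, every nonzero `F[H]`-module has a nonzero invariant vector, so `I`
annihilates the simple modules and `I ^ d` annihilates the modules of length at most `d`. Hence
`D d` acts trivially on `F ^ d`, and `D 1 ≥ D 2 ≥ ⋯ ≥ D d` is the required chain.
-/

open MonoidAlgebra
open scoped commutatorElement

theorem exists_ne_zero_forall_smul_eq_of_isPGroup {p : ℕ} [Fact p.Prime] {G A : Type*} [Group G]
    [Finite G] [AddCommGroup A] [Nontrivial A] [DistribMulAction G A] (hG : IsPGroup p G)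
    (hA : ∀ a : A, p • a = 0) : ∃ a : A, a ≠ 0 ∧ ∀ g : G, g • a = a := by
  obtain ⟨a, ha⟩ := exists_ne (0 : A)
  let S : AddSubgroup A := .closure (MulAction.orbit G a)
  have ha_mem : a ∈ S := AddSubgroup.subset_closure (MulAction.mem_orbit_self a)
  have hS_smul (g : G) {b : A} (hb : b ∈ S) : g • b ∈ S := by
    have : S ≤ S.comap (DistribSMul.toAddMonoidHom A g) := (AddSubgroup.closure_le _).2
      fun _ hc ↦ AddSubgroup.subset_closure (MulAction.mem_orbit_of_mem_orbit g hc)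
    exact this hb
  have hS_finite : Finite S := by
    have : Finite (MulAction.orbit G a) := Set.finite_range _
    have : AddGroup.FG S := AddGroup.closure_finite_fg _
    refine AddCommGroup.finite_of_fg_isAddTorsion S fun b ↦ ?_
    exact isOfFinAddOrder_iff_nsmul_eq_zero.2 ⟨p, (Fact.out : p.Prime).pos, Subtype.ext (hA b)⟩
  have hS_card : p ∣ Nat.card S := by
    have : addOrderOf (⟨a, ha_mem⟩ : S) = p :=
      addOrderOf_eq_prime (Subtype.ext (hA a)) fun h ↦ ha (congrArg Subtype.val h)
    exact this ▸ addOrderOf_dvd_natCard _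
  let orbitSpan : SubMulAction G A := ⟨S, hS_smul⟩
  obtain ⟨b, hb_fixed, hb_ne⟩ := hG.exists_fixed_point_of_prime_dvd_card_of_fixed_point
    orbitSpan hS_card (a := ⟨0, S.zero_mem⟩) fun g ↦ Subtype.ext (smul_zero g)
  exact ⟨b, fun h ↦ hb_ne (Subtype.ext h.symm), fun g ↦ congrArg Subtype.val (hb_fixed g)⟩

section Ring

variable {R : Type*} [Ring R]

theorem pow_mem_ideal_pow_mul {I : Ideal R} [I.IsTwoSided] {n : ℕ} {x : R} (hx : x ∈ I ^ n)
    (m : ℕ) : x ^ m ∈ I ^ (n * m) := by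
  induction m with
  | zero => simp [Submodule.pow_zero]
  | succ m ih =>
    rw [pow_succ, Nat.mul_succ, Ideal.IsTwoSided.pow_add]
    exact Ideal.mul_mem_mul ih hx

variable {M : Type*} [AddCommGroup M] [Module R M]

theorem jacobson_pow_smul_eq_bot_of_height_le [IsNoetherian R M] {n : ℕ} {N : Submodule R M}
    (hN : Order.height N ≤ n) : Ring.jacobson R ^ n • N = ⊥ := by
  induction n generalizing N with
  | zero =>
    obtain rfl : N = ⊥ := by simpa using hN
    exact Submodule.smul_bot _
  | succ n ih =>
    obtain rfl | hne := eq_or_ne N ⊥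
    · exact Submodule.smul_bot _
    · have hlt : Ring.jacobson R • N < N := (IsNoetherian.noetherian N).jacobson_smul_lt hne
      rw [Submodule.pow_succ, Submodule.mul_smul]
      refine ih ((ENat.add_le_add_iff_right ENat.one_ne_top).1 ?_)
      exact_mod_cast (Order.height_add_one_le hlt).trans hN

theorem jacobson_pow_smul_top_eq_bot_of_length_le {n : ℕ} (hM : Module.length R M ≤ n) :
    Ring.jacobson R ^ n • (⊤ : Submodule R M) = ⊥ := by
  have : IsFiniteLength R M := Module.length_ne_top_iff.1 (ne_top_of_le_ne_top (by simp) hM)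
  have := (isFiniteLength_iff_isNoetherian_isArtinian.1 this).1
  exact jacobson_pow_smul_eq_bot_of_height_le (Module.length_eq_height R M ▸ hM)

end Ring

section AugmentationIdeal

variable (k : Type*) [CommRing k] (G : Type*)

section Monoid

variable [Monoid G]

/-- The augmentation ideal of the group algebra `k[G]`: the kernel of the `k`-algebra map
`k[G] → k` sending every element of `G` to `1`. -/
noncomputable def augmentationIdeal : Ideal k[G] :=
  RingHom.ker (MonoidAlgebra.lift k k G 1)

instance : (augmentationIdeal k G).IsTwoSided :=
  inferInstanceAs (RingHom.ker _).IsTwoSided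

variable {k G}

theorem of_sub_one_mem_augmentationIdeal (g : G) : of k G g - 1 ∈ augmentationIdeal k G := by
  simp [augmentationIdeal, RingHom.mem_ker]

theorem smul_eq_zero_of_mem_augmentationIdeal {M : Type*} [AddCommGroup M] [Module k[G] M]
    {v : M} (hv : ∀ g : G, of k G g • v = v) {a : k[G]} (ha : a ∈ augmentationIdeal k G) :
    a • v = 0 := by
  have smul_eq (b : k[G]) : b • v = algebraMap k k[G] (MonoidAlgebra.lift k k G 1 b) • v := by
    induction b using MonoidAlgebra.induction_on with
    | of g => rw [hv, lift_of, MonoidHom.one_apply, map_one, one_smul]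
    | add b c hb hc => rw [add_smul, hb, hc, map_add, map_add, add_smul]
    | smul r b hb => rw [Algebra.smul_def, mul_smul, hb, ← mul_smul, ← map_mul]; simp
  rw [smul_eq, RingHom.mem_ker.1 ha, map_zero, zero_smul]

end Monoid

variable {k G} {p : ℕ} [Fact p.Prime] [CharP k p] [Group G] [Finite G]

theorem augmentationIdeal_smul_eq_zero_of_isSimpleModule (hG : IsPGroup p G) {M : Type*}
    [AddCommGroup M] [Module k[G] M] [IsSimpleModule k[G] M] {a : k[G]}
    (ha : a ∈ augmentationIdeal k G) (v : M) : a • v = 0 := by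
  have : Nontrivial M := IsSimpleModule.nontrivial k[G] M
  let _ : DistribMulAction G M := DistribMulAction.compHom M (of k G)
  have p_smul (w : M) : p • w = 0 := by
    rw [← Nat.cast_smul_eq_nsmul k[G], ← map_natCast (algebraMap k k[G]), CharP.cast_eq_zero,
      map_zero, zero_smul]
  obtain ⟨w, hw_ne, hw⟩ := exists_ne_zero_forall_smul_eq_of_isPGroup hG p_smul
  obtain ⟨b, rfl⟩ := IsSimpleModule.toSpanSingleton_surjective k[G] hw_ne v
  rw [LinearMap.toSpanSingleton_apply, ← mul_smul]
  exact smul_eq_zero_of_mem_augmentationIdeal hw (Ideal.IsTwoSided.mul_mem_of_left b ha)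

theorem augmentationIdeal_le_jacobson (hG : IsPGroup p G) :
    augmentationIdeal k G ≤ Ring.jacobson k[G] := by
  rw [Ring.jacobson_eq_sInf_isMaximal]
  refine le_sInf fun m (hm : m.IsMaximal) a ha ↦ ?_
  have : IsSimpleModule k[G] (k[G] ⧸ m) := isSimpleModule_iff_isCoatom.2 hm.out
  rw [← Submodule.Quotient.mk_eq_zero, ← mul_one a, ← smul_eq_mul, Submodule.Quotient.mk_smul]
  exact augmentationIdeal_smul_eq_zero_of_isSimpleModule hG ha _

end AugmentationIdeal

section DimensionSubgroup

variable (k : Type*) [CommRing k] (G : Type*) [Group G]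

/-- The `n`-th dimension subgroup of `G` over `k`, consisting of the `g` with `g - 1 ∈ I ^ n` for
the augmentation ideal `I` of `k[G]`; as a kernel, it is visibly a normal subgroup. -/
noncomputable def dimensionSubgroup (n : ℕ) : Subgroup G :=
  ((Ideal.Quotient.mk (augmentationIdeal k G ^ n)).toMonoidHom.comp (of k G)).ker

instance (n : ℕ) : (dimensionSubgroup k G n).Normal :=
  MonoidHom.normal_ker _

variable {k G} {m n : ℕ} {g : G}

theorem mem_dimensionSubgroup_iff :
    g ∈ dimensionSubgroup k G n ↔ of k G g - 1 ∈ augmentationIdeal k G ^ n := by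
  rw [← Ideal.Quotient.mk_eq_mk_iff_sub_mem, map_one]
  rfl

variable (k G) in
theorem dimensionSubgroup_one : dimensionSubgroup k G 1 = ⊤ :=
  (Subgroup.eq_top_iff' _).2 fun g ↦ mem_dimensionSubgroup_iff.2 <|
    (Submodule.pow_one (M := augmentationIdeal k G)).symm ▸ of_sub_one_mem_augmentationIdeal g

variable (k G) in
theorem dimensionSubgroup_antitone : Antitone (dimensionSubgroup k G) := fun _ _ hmn _ hg ↦
  mem_dimensionSubgroup_iff.2 (Ideal.pow_le_pow_right hmn (mem_dimensionSubgroup_iff.1 hg))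

variable (k G m n) in
theorem commutator_dimensionSubgroup_le :
    ⁅dimensionSubgroup k G m, dimensionSubgroup k G n⁆ ≤ dimensionSubgroup k G (m + n) := by
  refine Subgroup.commutator_le.2 fun g hg h hh ↦ ?_
  have hx := mem_dimensionSubgroup_iff.1 (inv_mem hg)
  have hy := mem_dimensionSubgroup_iff.1 (inv_mem hh)
  have hxy := Ideal.mul_mem_mul hx hy
  have hyx := Ideal.mul_mem_mul hy hx
  rw [← Ideal.IsTwoSided.pow_add] at hxy hyx
  rw [add_comm] at hyx
  have hcomm : of k G (g⁻¹ * h⁻¹) - of k G (h⁻¹ * g⁻¹) ∈ augmentationIdeal k G ^ (m + n) := by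
    convert sub_mem hxy hyx using 1
    rw [map_mul, map_mul]
    noncomm_ring
  have hmem : (h⁻¹ * g⁻¹)⁻¹ * (g⁻¹ * h⁻¹) ∈ dimensionSubgroup k G (m + n) :=
    (MonoidHom.eq_iff _).1 ((Ideal.Quotient.mk_eq_mk_iff_sub_mem _ _).2 hcomm)
  simpa only [commutatorElement_def, mul_inv_rev, inv_inv, mul_assoc] using hmem

variable {p : ℕ} [Fact p.Prime] [CharP k p]

theorem pow_mem_dimensionSubgroup_mul (hg : g ∈ dimensionSubgroup k G n) :
    g ^ p ∈ dimensionSubgroup k G (n * p) := by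
  have : CharP k[G] p := charP_of_injective_algebraMap (FaithfulSMul.algebraMap_injective k k[G]) p
  rw [mem_dimensionSubgroup_iff] at hg ⊢
  rw [map_pow, ← one_pow p, ← sub_pow_char_of_commute p (Commute.one_right _)]
  exact pow_mem_ideal_pow_mul hg p

theorem dimensionSubgroup_le_ker [Finite G] (hG : IsPGroup p G) {V : Type*} [AddCommGroup V]
    [Module k V] (ρ : Representation k G V) (hV : Module.length k V ≤ n) :
    dimensionSubgroup k G n ≤ MonoidHom.ker ρ := by
  have hlen : Module.length k[G] ρ.asModule ≤ n := by
    have := Submodule.length_le_length_restrictScalars k (⊤ : Submodule k[G] ρ.asModule)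
    rw [Submodule.restrictScalars_top, Module.length_top, Module.length_top] at this
    exact this.trans (ρ.asModuleEquiv.length_eq.trans_le hV)
  intro g hg
  refine LinearMap.ext fun v ↦ sub_eq_zero.1 ?_
  have hmem : (of k G g - 1) • ρ.asModuleEquiv.symm v ∈
      Ring.jacobson k[G] ^ n • (⊤ : Submodule k[G] ρ.asModule) :=
    Submodule.smul_mem_smul (Ideal.pow_right_mono (augmentationIdeal_le_jacobson hG) n
      (mem_dimensionSubgroup_iff.1 hg)) trivial
  rwa [jacobson_pow_smul_top_eq_bot_of_length_le hlen, Submodule.mem_bot, sub_smul, one_smul,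
    ← Representation.asModuleEquiv_symm_map_rho, ← map_sub, LinearEquiv.map_eq_zero_iff] at hmem

end DimensionSubgroup

theorem stmt_3_general {p : ℕ} [Fact p.Prime] {k Γ V : Type*} [CommRing k] [CharP k p] [Group Γ]
    [AddCommGroup V] [Module k V] {ρ : Representation k Γ V} {H : Subgroup Γ} [Finite H]
    (hH : IsPGroup p H) (hρ : Set.InjOn ρ H) {d : ℕ} (hd : Module.length k V ≤ d) :
    ∃ K : ℕ → Subgroup Γ, K 0 = H ∧ K (d - 1) = ⊥ ∧ Antitone K ∧
      (∀ i, H ≤ Subgroup.normalizer (K i : Set Γ)) ∧ (∀ i, ⁅K i, K i⁆ ≤ K (i + 1)) ∧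
      ∀ i, ∀ x ∈ K i, x ^ p ∈ K (i + 1) := by
  have hanti : Antitone fun i ↦ dimensionSubgroup k H (i + 1) :=
    fun _ _ hij ↦ dimensionSubgroup_antitone k H (Nat.add_le_add_right hij 1)
  refine ⟨fun i ↦ (dimensionSubgroup k H (i + 1)).map H.subtype, ?_, ?_, ?_, ?_, ?_, ?_⟩
  · change (dimensionSubgroup k H 1).map H.subtype = H
    rw [dimensionSubgroup_one, ← MonoidHom.range_eq_map, H.range_subtype]
  · have hker : MonoidHom.ker (ρ.comp H.subtype) = ⊥ :=
      (MonoidHom.ker_eq_bot_iff _).2 (Set.injOn_iff_injective.1 hρ)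
    have hlen : Module.length k V ≤ (d - 1 + 1 : ℕ) := hd.trans (by norm_cast; omega)
    rw [Subgroup.map_eq_bot_iff_of_injective _ H.subtype_injective, ← le_bot_iff, ← hker]
    exact dimensionSubgroup_le_ker hH _ hlen
  · exact fun i j hij ↦ Subgroup.map_mono (hanti hij)
  · intro i
    have := (dimensionSubgroup k H (i + 1)).le_normalizer_map H.subtype
    rwa [Subgroup.normalizer_eq_top, ← MonoidHom.range_eq_map, H.range_subtype] at this
  · intro i
    rw [← Subgroup.map_commutator]
    exact Subgroup.map_mono ((commutator_dimensionSubgroup_le k H _ _).trans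
      (dimensionSubgroup_antitone k H (by omega)))
  · rintro i _ ⟨x, hx, rfl⟩
    have hp : i + 1 + 1 ≤ (i + 1) * p := by nlinarith [(Fact.out : p.Prime).two_le]
    have hx_pow := dimensionSubgroup_antitone k H hp (pow_mem_dimensionSubgroup_mul hx)
    exact ⟨x ^ p, hx_pow, map_pow _ _ _⟩

/-- Corollary `cor:length d-1`: a finite `p`-subgroup `H` of `GL_d(F)`, `F` of characteristic
`p`, admits a chain `H = H_0 ⊇ H_1 ⊇ ⋯ ⊇ H_{d-1} = {1}` of normal subgroups of `H` whose
successive quotients are abelian of exponent dividing `p`. -/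
theorem stmt_3 (p : ℕ) (hp : p.Prime) (F : Type*) [Field F] [CharP F p]
    (d : ℕ) (hd : 1 ≤ d)
    (H : Subgroup (GL (Fin d) F)) [Fintype H] (hH : ∃ n : ℕ, Fintype.card H = p ^ n) :
    ∃ K : ℕ → Subgroup (GL (Fin d) F),
      K 0 = H ∧ K (d - 1) = ⊥ ∧
      (∀ i : ℕ, K (i + 1) ≤ K i) ∧
      (∀ i : ℕ, K i ≤ H) ∧
      (∀ i : ℕ, ∀ h ∈ H, ∀ x ∈ K i, h * x * h⁻¹ ∈ K i) ∧
      (∀ i : ℕ, i < d - 1 → ∀ x ∈ K i, ∀ y ∈ K i, x * y * x⁻¹ * y⁻¹ ∈ K (i + 1)) ∧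
      (∀ i : ℕ, i < d - 1 → ∀ x ∈ K i, x ^ p ∈ K (i + 1)) := by
  have : Fact p.Prime := ⟨hp⟩
  have hpgroup : IsPGroup p H := IsPGroup.iff_card.2 (Nat.card_eq_fintype_card (α := H) ▸ hH)
  let ρ : Representation F (GL (Fin d) F) (Fin d → F) :=
    (Units.coeHom _).comp Matrix.GeneralLinearGroup.toLin.toMonoidHom
  have hρ : Function.Injective ρ :=
    Units.val_injective.comp Matrix.GeneralLinearGroup.toLin.injective
  obtain ⟨K, hzero, hlast, hanti, hnormal, hcomm, hpow⟩ :=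
    stmt_3_general hpgroup hρ.injOn (Module.length_eq_finrank F (Fin d → F)).le
  rw [Module.finrank_fin_fun] at hlast
  exact ⟨K, hzero, hlast, fun i ↦ hanti i.le_succ, fun i ↦ hzero ▸ hanti i.zero_le,
    fun i h hh x hx ↦ (Subgroup.mem_normalizer_iff.1 (hnormal i hh) x).1 hx,
    fun i _ x hx y hy ↦ hcomm i (Subgroup.commutator_mem_commutator hx hy),
    fun i _ ↦ hpow i⟩
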